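/- arXiv:2401.04026 — 2 statements merged into one kernel-verified Lean document; each statement's English description precedes it below -/
import Mathlib

section
/- For every integer n ≥ 3, Euler's totient function satisfies 2·φ(n) = 2n + (−1)^n − 1 − 4·Λ(n,2). -/
/-!
The `n - 1` integers `a` with `1 ≤ a < n` split into the `φ n` units modulo `n` and the set of
those not coprime to `n`. The involution `a ↦ n - a` preserves the latter set, since
`gcd (a, n - a) = gcd (a, n)`, and its orbits are exactly the two-part partitions of `n` with
nontrivial gcd. Every orbit has two elements except `{n / 2}`, which occurs when `n` is even
(`n / 2 ≥ 2` is then not coprime to `n`). Hence `n - 1 - φ n` is `2 Λ(n, 2)`, less one when `n`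
is even.
-/

open Finset

/-- `Lam n k` is the number of partitions of `n` with exactly `k` parts whose parts have
gcd greater than 1 (not-relatively prime partitions). -/
def Lam (n k : ℕ) : ℕ :=
  (Finset.univ.filter fun P : n.Partition =>
    Multiset.card P.parts = k ∧ 1 < P.parts.gcd).card

/-- A two-part partition with nontrivial gcd is determined by its smaller part. -/
theorem Lam_two_eq_card (n : ℕ) :
    Lam n 2 = ((Finset.Ico 1 n).filter fun a => ¬ n.Coprime a ∧ 2 * a ≤ n).card := by
  unfold Lam
  symm
  refine Finset.card_bij
    (fun a ha => (⟨{a, n - a}, ?_, ?_⟩ : n.Partition)) ?_ ?_ ?_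
  · intro i hi
    simp only [Finset.mem_filter, Finset.mem_Ico] at ha
    simp only [Multiset.insert_eq_cons, Multiset.mem_cons, Multiset.mem_singleton] at hi
    omega
  · simp only [Finset.mem_filter, Finset.mem_Ico] at ha
    simp only [Multiset.insert_eq_cons, Multiset.sum_cons, Multiset.sum_singleton]
    omega
  · intro a ha
    simp only [Finset.mem_filter, Finset.mem_Ico] at ha
    obtain ⟨⟨h1, h2⟩, h3, h4⟩ := ha
    simp only [Finset.mem_filter, Finset.mem_univ, true_and, Multiset.insert_eq_cons,
      Multiset.card_cons, Multiset.card_singleton, Multiset.gcd_cons, Multiset.gcd_singleton,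
      normalize_eq]
    change 1 < Nat.gcd a (n - a)
    rw [Nat.gcd_sub_self_right h2.le]
    have hpos := Nat.gcd_pos_of_pos_left n h1
    rw [Nat.coprime_comm, Nat.Coprime] at h3
    omega
  · intro a ha b hb hab
    simp only [Finset.mem_filter, Finset.mem_Ico] at ha hb
    have h : ({a, n - a} : Multiset ℕ) = {b, n - b} := congrArg Nat.Partition.parts hab
    have hm : a ∈ ({b, n - b} : Multiset ℕ) := by
      rw [← h]; simp
    simp only [Multiset.insert_eq_cons, Multiset.mem_cons, Multiset.mem_singleton] at hm
    omega
  · intro P hP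
    simp only [Finset.mem_filter, Finset.mem_univ, true_and] at hP
    obtain ⟨hc, hg⟩ := hP
    obtain ⟨x, y, hxy, hle⟩ : ∃ x y, P.parts = {x, y} ∧ x ≤ y := by
      obtain ⟨x, y, hxy⟩ := Multiset.card_eq_two.mp hc
      rcases le_total x y with h | h
      · exact ⟨x, y, hxy, h⟩
      · exact ⟨y, x, hxy.trans (Multiset.pair_comm x y), h⟩
    have hs := P.parts_sum
    have hx : 0 < x := P.parts_pos (by rw [hxy]; simp)
    rw [hxy] at hs hg
    simp only [Multiset.insert_eq_cons, Multiset.sum_cons, Multiset.sum_singleton,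
      Multiset.gcd_cons, Multiset.gcd_singleton, normalize_eq] at hs hg
    change 1 < Nat.gcd x y at hg
    refine ⟨x, ?_, ?_⟩
    · simp only [Finset.mem_filter, Finset.mem_Ico]
      refine ⟨by omega, ?_, by omega⟩
      rw [Nat.coprime_comm, Nat.Coprime, ← hs, Nat.gcd_self_add_right]
      omega
    · apply Nat.Partition.ext
      rw [hxy]
      change ({x, n - x} : Multiset ℕ) = {x, y}
      rw [← hs, Nat.add_sub_cancel_left]

/-- The reflection `a ↦ n - a` matches the non-units below `n / 2` with those above. -/
theorem card_lower_eq_card_upper (n : ℕ) :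
    ((Finset.Ico 1 n).filter fun a => ¬ n.Coprime a ∧ 2 * a < n).card =
      ((Finset.Ico 1 n).filter fun a => ¬ n.Coprime a ∧ n < 2 * a).card := by
  have key : ∀ a, a ≤ n → (n.Coprime (n - a) ↔ n.Coprime a) := fun a ha =>
    Nat.coprime_self_sub_right ha
  refine Finset.card_bij' (fun a _ => n - a) (fun a _ => n - a) ?_ ?_ ?_ ?_ <;>
    intro a ha <;> simp only [Finset.mem_filter, Finset.mem_Ico] at ha ⊢
  · rw [key a (by omega)]
    exact ⟨by omega, ha.2.1, by omega⟩
  · rw [key a (by omega)]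
    exact ⟨by omega, ha.2.1, by omega⟩
  · omega
  · omega

/-- The only possible fixed point of the reflection is `n / 2`, a non-unit as soon as `n ≥ 3`. -/
theorem card_middle (n : ℕ) (hn : 3 ≤ n) :
    ((Finset.Ico 1 n).filter fun a => ¬ n.Coprime a ∧ 2 * a = n).card =
      if Even n then 1 else 0 := by
  split_ifs with h
  · obtain ⟨m, rfl⟩ := h
    rw [Finset.card_eq_one]
    refine ⟨m, ?_⟩
    ext a
    simp only [Finset.mem_filter, Finset.mem_Ico, Finset.mem_singleton]
    refine ⟨fun h => by omega, ?_⟩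
    rintro rfl
    refine ⟨by omega, ?_, by omega⟩
    rw [Nat.coprime_add_self_left, Nat.coprime_self]
    omega
  · rw [Finset.card_eq_zero, Finset.filter_eq_empty_iff]
    rintro a - ⟨-, h2⟩
    exact h ⟨a, by omega⟩

theorem totient_add_card_not_coprime (n : ℕ) (hn : 3 ≤ n) :
    Nat.totient n + ((Finset.Ico 1 n).filter fun a => ¬ n.Coprime a).card = n - 1 := by
  have h : Nat.totient n = ((Finset.Ico 1 n).filter fun a => n.Coprime a).card := by
    rw [Nat.totient_eq_card_coprime]
    congr 1
    ext a
    simp only [Finset.mem_filter, Finset.mem_range, Finset.mem_Ico]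
    refine ⟨fun ⟨h1, h2⟩ => ⟨⟨?_, h1⟩, h2⟩, fun h => ⟨h.1.2, h.2⟩⟩
    rcases Nat.eq_zero_or_pos a with rfl | h0
    · rw [Nat.coprime_zero_right] at h2
      omega
    · exact h0
  rw [h, Finset.card_filter_add_card_filter_not, Nat.card_Ico]

/-- For every integer `n ≥ 3`, Euler's totient function satisfies
`2·φ(n) = 2n + (−1)^n − 1 − 4·Λ(n,2)`. -/
theorem stmt_17 (n : ℕ) (hn : 3 ≤ n) :
    2 * (Nat.totient n : ℤ) = 2 * n + (-1) ^ n - 1 - 4 * Lam n 2 := by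
  have h1 := totient_add_card_not_coprime n hn
  have h2 := card_middle n hn
  have h3 := card_lower_eq_card_upper n
  have h4 := Lam_two_eq_card n
  set S := (Finset.Ico 1 n).filter fun a => ¬ n.Coprime a with hS
  simp only [← Finset.filter_filter, ← hS] at h2 h3 h4
  have h5 := Finset.card_filter_add_card_filter_not (s := S) (fun a => 2 * a ≤ n)
  have h6 := Finset.card_filter_add_card_filter_not
    (s := S.filter fun a => 2 * a ≤ n) (fun a => 2 * a < n)
  have e1 : (S.filter fun a => 2 * a ≤ n).filter (fun a => 2 * a < n) =
      S.filter fun a => 2 * a < n := by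
    rw [Finset.filter_filter]
    exact Finset.filter_congr fun a _ => by omega
  have e2 : (S.filter fun a => 2 * a ≤ n).filter (fun a => ¬ 2 * a < n) =
      S.filter fun a => 2 * a = n := by
    rw [Finset.filter_filter]
    exact Finset.filter_congr fun a _ => by omega
  rw [e1, e2] at h6
  simp only [not_le] at h5
  rcases Nat.even_or_odd n with h | h
  · rw [h.neg_one_pow]
    rw [if_pos h] at h2
    omega
  · rw [h.neg_one_pow]
    rw [if_neg (Nat.not_even_iff_odd.mpr h)] at h2
    omega
end

section
/- For every integer n ≥ 3, Euler's totient function satisfies φ(n) = 2·(⟨(n+3)²/12⟩ − Λ(n,2) − 1 − ⟨n²/12⟩), where ⟨x⟩ denotes the nearest integer to x (both arguments are never half-integers). -/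
/-!
Both counts reduce to the integers `a` with `1 ≤ a ≤ n / 2`. A partition of `n` into two parts is
`{a, n - a}` for exactly one such `a`, and its gcd is `gcd a n`; hence `Lam n 2` counts the `a` not
coprime to `n` (`Lam_two`). On the other hand `a ↦ n - a` is an involution on the residues
coprime to `n`, without fixed point when `n ≥ 3`, so `φ n` is twice the number of such `a` that are
coprime to `n` (`totient_eq_two_mul`). Therefore `φ n = 2 (n / 2 - Lam n 2)`, and it remains to
see that the two rounded squares differ by `n / 2 + 1` (`round_sub_round`), which is a computation
with `n` modulo 6.
-/

open Finset

lemma gcd_pair (a b : ℕ) : ({a, b} : Multiset ℕ).gcd = Nat.gcd a b := by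
  simp [Multiset.insert_eq_cons, Multiset.gcd_cons, Multiset.gcd_singleton, gcd_eq_nat_gcd]

lemma Lam_two (n : ℕ) :
    Lam n 2 = #{a ∈ Icc 1 (n / 2) | ¬ Nat.Coprime n a} := by
  symm
  unfold Lam
  have key : ∀ a, a ∈ ({a ∈ Icc 1 (n / 2) | ¬ Nat.Coprime n a} : Finset ℕ) →
      1 ≤ a ∧ 2 * a ≤ n ∧ ¬ Nat.Coprime n a := by
    intro a ha
    simp only [mem_filter, mem_Icc] at ha
    exact ⟨ha.1.1, by omega, ha.2⟩
  have gcd_eq : ∀ a, a ≤ n → Nat.gcd a (n - a) = Nat.gcd n a := by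
    intro a ha
    rw [Nat.gcd_comm n a, Nat.gcd_sub_self_right ha]
  refine Finset.card_bij (fun a ha => (⟨{a, n - a}, ?_, ?_⟩ : n.Partition)) ?_ ?_ ?_
  · have := key a ha
    intro i hi
    simp only [Multiset.insert_eq_cons, Multiset.mem_cons, Multiset.mem_singleton] at hi
    omega
  · have := key a ha
    simp only [Multiset.insert_eq_cons, Multiset.sum_cons, Multiset.sum_singleton]
    omega
  · intro a ha
    obtain ⟨h1, h2, h3⟩ := key a ha
    simp only [mem_filter, mem_univ, true_and]
    refine ⟨by simp, ?_⟩
    rw [gcd_pair, gcd_eq a (by omega)]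
    have : 0 < Nat.gcd n a := Nat.gcd_pos_of_pos_right _ h1
    unfold Nat.Coprime at h3
    omega
  · intro a ha b hb hab
    have ha' := key a ha
    have hb' := key b hb
    have h : ({a, n - a} : Multiset ℕ) = {b, n - b} := congrArg Nat.Partition.parts hab
    have : a ∈ ({b, n - b} : Multiset ℕ) := h ▸ by simp
    simp only [Multiset.insert_eq_cons, Multiset.mem_cons, Multiset.mem_singleton] at this
    omega
  · intro P hP
    simp only [mem_filter, mem_univ, true_and] at hP
    obtain ⟨hc, hg⟩ := hP
    obtain ⟨x, y, hxy⟩ := Multiset.card_eq_two.1 hc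
    -- order the two parts so that the smaller one is the preimage
    obtain ⟨x, y, hxy, hle⟩ : ∃ x y, P.parts = {x, y} ∧ x ≤ y := by
      rcases le_total x y with h | h
      · exact ⟨x, y, hxy, h⟩
      · exact ⟨y, x, by rw [hxy, Multiset.pair_comm], h⟩
    have hs := P.parts_sum
    have hx : 0 < x := P.parts_pos (by rw [hxy]; simp)
    rw [hxy] at hs
    simp only [Multiset.insert_eq_cons, Multiset.sum_cons, Multiset.sum_singleton] at hs
    have hy : n - x = y := by omega
    rw [hxy, gcd_pair, ← hy, gcd_eq x (by omega)] at hg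
    refine ⟨x, ?_, ?_⟩
    · simp only [mem_filter, mem_Icc]
      refine ⟨by omega, ?_⟩
      unfold Nat.Coprime
      omega
    · ext1
      simp only [hxy, hy]

lemma totient_eq_two_mul (n : ℕ) (hn : 3 ≤ n) :
    Nat.totient n = 2 * #{a ∈ Icc 1 (n / 2) | Nat.Coprime n a} := by
  have hsub : ∀ a, a ≤ n → (Nat.Coprime n (n - a) ↔ Nat.Coprime n a) :=
    fun a ha => Nat.coprime_self_sub_right ha
  -- the involution `a ↦ n - a` could only fix `n / 2`, which is not coprime to `n ≥ 3`
  have hhalf : ∀ a, Nat.Coprime n a → 2 * a ≠ n := by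
    rintro a h rfl
    have := Nat.Coprime.eq_one_of_dvd h.symm (Dvd.intro_left 2 rfl)
    omega
  have hzero : ¬ Nat.Coprime n 0 := by
    rw [Nat.coprime_zero_right]
    omega
  have hpos : ∀ a, Nat.Coprime n a → 0 < a := fun a h =>
    Nat.pos_of_ne_zero fun h0 => hzero (h0 ▸ h)
  rw [Nat.totient_eq_card_coprime,
    ← Finset.card_filter_add_card_filter_not (fun a => a ≤ n / 2), two_mul]
  congr 1
  · congr 1
    ext a
    simp only [mem_filter, mem_range, mem_Icc]
    constructor
    · rintro ⟨⟨h1, h2⟩, h3⟩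
      exact ⟨⟨hpos a h2, h3⟩, h2⟩
    · rintro ⟨⟨h1, h2⟩, h3⟩
      exact ⟨⟨by omega, h3⟩, h2⟩
  · refine Finset.card_nbij' (fun a => n - a) (fun a => n - a) ?_ ?_ ?_ ?_
    · intro a ha
      simp only [coe_filter, mem_filter, mem_range, mem_Icc, Set.mem_ofPred_eq] at ha ⊢
      exact ⟨by omega, (hsub a (by omega)).2 ha.1.2⟩
    · intro a ha
      simp only [coe_filter, mem_filter, mem_range, mem_Icc, Set.mem_ofPred_eq] at ha ⊢
      have := hhalf a ha.2
      exact ⟨⟨by omega, (hsub a (by omega)).2 ha.2⟩, by omega⟩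
    · intro a ha
      simp only [coe_filter, mem_filter, mem_range, Set.mem_ofPred_eq] at ha
      simp only
      omega
    · intro a ha
      simp only [coe_filter, mem_Icc, Set.mem_ofPred_eq] at ha
      simp only
      omega

lemma round_sq_div (m : ℕ) : round (((m : ℚ) ^ 2) / 12) = ((m : ℤ) ^ 2 + 6) / 12 := by
  rw [round_eq]
  have h : ((m : ℚ) ^ 2) / 12 + 1 / 2 = (((m : ℤ) ^ 2 + 6 : ℤ) : ℚ) / ((12 : ℕ) : ℚ) := by
    push_cast
    ring
  rw [h, Rat.floor_intCast_div_natCast]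
  norm_num

lemma round_sub_round (n : ℕ) :
    round ((((n : ℚ) + 3) ^ 2) / 12) - round (((n : ℚ) ^ 2) / 12) = ((n / 2 : ℕ) : ℤ) + 1 := by
  have h := round_sq_div (n + 3)
  push_cast at h
  rw [h, round_sq_div]
  obtain ⟨q, r, hr, rfl⟩ : ∃ q r, r < 6 ∧ n = 6 * q + r :=
    ⟨n / 6, n % 6, Nat.mod_lt _ (by norm_num), (Nat.div_add_mod n 6).symm⟩
  -- for fixed `r` both squares are linear in `q` and `q ^ 2`
  interval_cases r <;> push_cast <;> ring_nf <;> generalize (q : ℤ) ^ 2 = s <;> omega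

/-- For every integer `n ≥ 3`, Euler's totient function satisfies
`φ(n) = 2·(⟨(n+3)²/12⟩ − Λ(n,2) − 1 − ⟨n²/12⟩)`, where `⟨x⟩` (here `round`) is the integer
nearest to the rational `x` (the arguments are never half-integers). -/
theorem stmt_18 (n : ℕ) (hn : 3 ≤ n) :
    (Nat.totient n : ℤ) =
      2 * (round ((((n : ℚ) + 3) ^ 2) / 12) - Lam n 2 - 1 - round (((n : ℚ) ^ 2) / 12)) := by
  have h1 := round_sub_round n
  have h2 := totient_eq_two_mul n hn
  have h3 := Lam_two n
  have h4 := Finset.card_filter_add_card_filter_not (s := Icc 1 (n / 2)) (fun a => Nat.Coprime n a)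
  rw [Nat.card_Icc] at h4
  omega
end
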